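/- For every rational number α and every integer k ≥ 0, binom(α+k−1, k)_q = ({α}_q; q)_k / (q;q)_k in ℚ(q), i.e. binom(α+k−1,k)_q · ∏_{i=1}^{k}(1 − q^i) = ∏_{i=0}^{k−1}(1 − q^{i}·{α}_q). -/

import Mathlib

/-!
Everything follows from the shift rule `[α+1]_q = 1 + q[α]_q`, valid for all rational `α`
(`qRat_add_one`). For `α > 1` it holds because adding `1` to `α` only increases the leading
coefficient of its continued fraction by one, also after the expansion has been brought to even
length (`qRatCF_add_one`). For `α ≤ 1` it is built into the extension of `[·]_q`: the value
`([α+m]_q - [m]_q)/q^m` does not depend on the `m` with `α + m > 1` (`qRat_eq_of_lt`).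

The shift rule gives `{α}_q = 1 + (q-1)[α]_q` and `[α+i]_q = [i]_q + q^i [α]_q`, so that
`(1-q)[α+i]_q = 1 - q^i {α}_q`. Together with `(1-q)[i+1]_q = 1 - q^{i+1}`, multiplying over `i < k`
turns the quotient `∏ [α+i]_q / ∏ [i+1]_q` into the quotient of the two Pochhammer symbols.
-/

noncomputable section

open Finset

/-- The `q`-integer `[n]_q = 1 + q + ⋯ + q^{n-1}` as a rational function in `q`. -/
def qNum (n : ℕ) : RatFunc ℚ := ∑ i ∈ Finset.range n, RatFunc.X ^ i

/-- The `q⁻¹`-integer `[n]_{q⁻¹} = 1 + q⁻¹ + ⋯ + q^{-(n-1)}`. -/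
def qNumInv (n : ℕ) : RatFunc ℚ := ∑ i ∈ Finset.range n, (RatFunc.X)⁻¹ ^ i

/-- The continued fraction expansion of `p/q` computed by the Euclidean algorithm. -/
def cfNat (p q : ℕ) : List ℕ :=
  if h : q = 0 then [] else (p / q) :: cfNat q (p % q)
termination_by q
decreasing_by exact Nat.mod_lt _ (Nat.pos_of_ne_zero h)

/-- Turn a continued fraction expansion into one of even length,
replacing a final coefficient `aₙ` by `aₙ - 1, 1` if needed. -/
def evenize (l : List ℕ) : List ℕ :=
  if l.length % 2 = 0 then l else l.dropLast ++ [l.getLast! - 1, 1]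

/-- Evaluation of the Morier-Genoud--Ovsienko `q`-deformed continued fraction
`[a₁]_q + q^{a₁}/([a₂]_{q⁻¹} + q^{-a₂}/([a₃]_q + ⋯ + q^{a_{2m-1}}/[a_{2m}]_{q⁻¹}))`.
The boolean records whether the current position is odd (`true`) or even (`false`).
(The empty continued fraction is sent to `0`; since division by zero yields `0`
in `RatFunc ℚ`, a final term `[a]_{q⁻¹} + q^{-a}/0⁻ = [a]_{q⁻¹}` comes out correctly.) -/
def qCF : Bool → List ℕ → RatFunc ℚ
  | _, [] => 0
  | true, a :: l => qNum a + RatFunc.X ^ a / qCF false l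
  | false, a :: l => qNumInv a + (RatFunc.X)⁻¹ ^ a / qCF true l

/-- The Morier-Genoud--Ovsienko `q`-rational of `α > 1`, via the even-length
continued fraction expansion of `α`. -/
def qRatCF (α : ℚ) : RatFunc ℚ := qCF true (evenize (cfNat α.num.toNat α.den))

/-- The Morier-Genoud--Ovsienko `q`-rational `[α]_q ∈ ℚ(q)`, for all `α ∈ ℚ`:
for `α > 1` it is given by the `q`-deformed continued fraction, and it is
extended to all of `ℚ` by the rule `[α-1]_q = ([α]_q - 1)/q`. -/
def qRat (α : ℚ) : RatFunc ℚ :=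
  if 1 < α then qRatCF α
  else (qRatCF (α + (2 - ⌊α⌋).toNat) - qNum (2 - ⌊α⌋).toNat) / RatFunc.X ^ (2 - ⌊α⌋).toNat

/-- `{α}_q := [α+1]_q - [α]_q`, the substitute for `q^α`. -/
def qPow (α : ℚ) : RatFunc ℚ := qRat (α + 1) - qRat α

/-- The `q`-factorial `[k]_q!`. -/
def qFact (k : ℕ) : RatFunc ℚ := ∏ i ∈ Finset.range k, qNum (i + 1)

/-- The `q`-binomial coefficient `binom(α,k)_q = [α]_q [α-1]_q ⋯ [α-k+1]_q / [k]_q!`. -/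
def qBinom (α : ℚ) (k : ℕ) : RatFunc ℚ :=
  (∏ i ∈ Finset.range k, qRat (α - i)) / qFact k

/-- The Laurent-series expansion (at `q = 0`) of a rational function. -/
def lau (f : RatFunc ℚ) : LaurentSeries ℚ := ↑f

lemma qNum_succ (n : ℕ) : qNum (n + 1) = 1 + RatFunc.X * qNum n := by
  unfold qNum
  rw [geom_sum_succ, add_comm]

lemma qNum_add (m n : ℕ) : qNum (m + n) = qNum m + RatFunc.X ^ m * qNum n := by
  simp [qNum, Finset.sum_range_add, Finset.mul_sum, pow_add]

lemma one_sub_mul_qNum (n : ℕ) : (1 - RatFunc.X) * qNum n = 1 - RatFunc.X ^ n :=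
  mul_neg_geom_sum _ _

lemma qNum_succ_ne_zero (n : ℕ) : qNum (n + 1) ≠ 0 := by
  intro h
  have h1 := one_sub_mul_qNum (n + 1)
  rw [h, mul_zero, eq_comm, sub_eq_zero, ← RatFunc.algebraMap_X, ← map_pow,
    ← map_one (algebraMap (Polynomial ℚ) (RatFunc ℚ))] at h1
  have h2 := congrArg Polynomial.natDegree (RatFunc.algebraMap_injective ℚ h1)
  simp at h2

lemma qCF_true_succ_cons (a : ℕ) (l : List ℕ) :
    qCF true ((a + 1) :: l) = 1 + RatFunc.X * qCF true (a :: l) := by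
  simp only [qCF, qNum_succ]
  ring

/-- The coefficient `a` must be positive for the one-term expansion `[a]`, which becomes
`[a - 1, 1]`. -/
lemma qCF_evenize_succ_cons {a : ℕ} (ha : 0 < a) (l : List ℕ) :
    qCF true (evenize ((a + 1) :: l)) = 1 + RatFunc.X * qCF true (evenize (a :: l)) := by
  cases l with
  | nil =>
    obtain ⟨b, rfl⟩ := Nat.exists_eq_add_of_lt ha
    simpa [evenize] using qCF_true_succ_cons b [1]
  | cons b l =>
    obtain ⟨t, ht⟩ : ∃ t, ∀ c, evenize (c :: b :: l) = c :: t := by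
      by_cases hl : (l.length + 1 + 1) % 2 = 0
      · exact ⟨b :: l, fun c => by simp [evenize, hl]⟩
      · exact ⟨(b :: l).dropLast ++ [(b :: l).getLast! - 1, 1], fun c => by
          simp [evenize, hl, List.getLast!]⟩
    rw [ht, ht, qCF_true_succ_cons]

lemma qRatCF_add_one {β : ℚ} (hβ : 1 < β) :
    qRatCF (β + 1) = 1 + RatFunc.X * qRatCF β := by
  have hden : (β + 1).den = β.den := by simp
  have hnum : (β + 1).num = β.num + β.den := by
    have h1 := Rat.num_div_den (β + 1)
    have h2 := Rat.num_div_den β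
    have hd : (β.den : ℚ) ≠ 0 := by exact_mod_cast β.den_nz
    rw [hden, div_eq_iff hd] at h1
    rw [div_eq_iff hd] at h2
    have h3 : ((β + 1).num : ℚ) = β.num + β.den := by linear_combination h1 - h2
    exact_mod_cast h3
  have hlt : (β.den : ℤ) < β.num := by
    have h := Rat.num_div_den β
    have hd : (0 : ℚ) < β.den := by exact_mod_cast β.den_pos
    rw [← h, lt_div_iff₀ hd, one_mul] at hβ
    exact_mod_cast hβ
  have hnat : (β + 1).num.toNat = β.num.toNat + β.den := by omega
  have hle : β.den ≤ β.num.toNat := by omega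
  unfold qRatCF
  rw [hden, hnat, cfNat, cfNat.eq_1 β.num.toNat, dif_neg β.den_nz, dif_neg β.den_nz,
    Nat.add_div_right _ β.den_pos, Nat.add_mod_right]
  exact qCF_evenize_succ_cons (Nat.div_pos hle β.den_pos) _

lemma qRatCF_add_nat {β : ℚ} (hβ : 1 < β) (n : ℕ) :
    qRatCF (β + n) = qNum n + RatFunc.X ^ n * qRatCF β := by
  induction n with
  | zero => simp [qNum]
  | succ n ih =>
    rw [Nat.cast_succ, ← add_assoc, qRatCF_add_one (lt_add_of_lt_of_nonneg hβ n.cast_nonneg), ih,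
      qNum_succ]
    ring

/-- The extension of `[·]_q` to all rationals may be computed from any translate exceeding `1`. -/
lemma qRat_eq_of_lt (α : ℚ) (m : ℕ) (hm : 1 < α + m) :
    qRat α = (qRatCF (α + m) - qNum m) / RatFunc.X ^ m := by
  have hX : (RatFunc.X : RatFunc ℚ) ≠ 0 := RatFunc.X_ne_zero
  have key (r s : ℕ) (hr : 1 < α + r) : (qRatCF (α + r) - qNum r) / RatFunc.X ^ r =
      (qRatCF (α + (r + s : ℕ)) - qNum (r + s)) / RatFunc.X ^ (r + s) := by
    rw [Nat.cast_add, ← add_assoc, qRatCF_add_nat hr, add_comm r s, qNum_add, pow_add]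
    field_simp
    ring
  have indep (r s : ℕ) (hr : 1 < α + r) (hs : 1 < α + s) :
      (qRatCF (α + r) - qNum r) / RatFunc.X ^ r =
        (qRatCF (α + s) - qNum s) / RatFunc.X ^ s := by
    rcases le_total r s with h | h
    · obtain ⟨t, rfl⟩ := Nat.exists_eq_add_of_le h
      exact key r t hr
    · obtain ⟨t, rfl⟩ := Nat.exists_eq_add_of_le h
      exact (key s t hs).symm
  unfold qRat
  split_ifs with h
  · simpa [qNum] using indep 0 m (by simpa using h) hm
  · refine indep _ m ?_ hm
    have h1 := Int.self_le_toNat (2 - ⌊α⌋)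
    have h2 : (2 - ⌊α⌋ : ℚ) ≤ ((2 - ⌊α⌋).toNat : ℚ) := by exact_mod_cast h1
    linarith [Int.floor_le α]

lemma qRat_add_one (α : ℚ) : qRat (α + 1) = 1 + RatFunc.X * qRat α := by
  have hX : (RatFunc.X : RatFunc ℚ) ≠ 0 := RatFunc.X_ne_zero
  obtain ⟨m, hm⟩ := exists_nat_gt (1 - α)
  have h0 : 1 < α + m := by linarith
  rw [qRat_eq_of_lt (α + 1) m (by linarith), qRat_eq_of_lt α m h0, add_right_comm,
    qRatCF_add_one h0]
  have h1 := qNum_succ m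
  rw [qNum_add m 1, show qNum 1 = 1 by simp [qNum]] at h1
  field_simp
  linear_combination -h1

lemma one_sub_mul_qRat_add_nat (α : ℚ) (i : ℕ) :
    (1 - RatFunc.X) * qRat (α + i) = 1 - RatFunc.X ^ i * qPow α := by
  induction i with
  | zero =>
    rw [qPow, qRat_add_one, Nat.cast_zero, add_zero]
    ring
  | succ i ih =>
    rw [Nat.cast_succ, ← add_assoc, qRat_add_one]
    linear_combination RatFunc.X * ih

/-- `binom(α+k-1,k)_q = ({α}_q; q)_k / (q;q)_k`, i.e.
`binom(α+k-1,k)_q · ∏_{i=1}^{k}(1-q^i) = ∏_{i=0}^{k-1}(1 - q^{i}·{α}_q)`. -/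
theorem qBinom_add_sub_one_eq_pochhammer (α : ℚ) (k : ℕ) :
    qBinom (α + k - 1) k * ∏ i ∈ Finset.range k, (1 - RatFunc.X ^ (i + 1))
      = ∏ i ∈ Finset.range k, (1 - RatFunc.X ^ i * qPow α) := by
  have hF : qFact k ≠ 0 := Finset.prod_ne_zero_iff.mpr fun i _ => qNum_succ_ne_zero i
  have hnum : ∏ i ∈ Finset.range k, qRat (α + k - 1 - i) =
      ∏ i ∈ Finset.range k, qRat (α + i) := by
    rw [← Finset.prod_range_reflect]
    refine Finset.prod_congr rfl fun i hi => ?_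
    have hi' : i + 1 ≤ k := Finset.mem_range.mp hi
    rw [Nat.sub_sub, add_comm 1 i, Nat.cast_sub hi']
    congr 1
    push_cast
    ring
  simp_rw [← one_sub_mul_qNum, ← one_sub_mul_qRat_add_nat, Finset.prod_mul_distrib]
  rw [qBinom, hnum, ← qFact]
  field_simp

end
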